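/- Let ρ be a d×d density matrix and n ≥ 2. For a finite tuple of Hermitian d×d matrices (Y₁,…,Y_k), define E₀(Y₁,…,Y_k) as the infimum of ∑_{j=1}^{k} Tr[ρ(𝕊_{jj} − R_j Y_j − Y_j R_j + Y_j²)] over all families (𝕊_{jl})_{1≤j,l≤k} of d×d complex matrices satisfying 𝕊_{jl} = 𝕊_{lj} = 𝕊_{jl}† for all j,l, and all Hermitian d×d matrices R₁,…,R_k, subject to the constraint that the kd×kd block matrix with (j,l)-block 𝕊_{jl} − R_j R_l is positive semidefinite. Then for Hermitian d×d matrices X₁,…,Xₙ, E₀(X₁,…,Xₙ) ≥ (1/(n−1)) · ∑_{1≤j<k≤n} E₀(X_j, X_k). -/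

import Mathlib

/-!
Restricting a feasible point `(S, R)` of the `n`-observable program to two indices `j < k`
gives a feasible point of the program for `(X j, X k)`, because a principal submatrix of a
positive semidefinite matrix is positive semidefinite (`feasible_pair`). Writing `a j` for the
`j`-th summand of the objective, this yields `E0 ρ ![X j, X k] ≤ a j + a k`; summing over pairs,
each index occurs in `n - 1` of them (`sum_pairs`), so the pairwise bounds add up to at most
`(n - 1) * ∑ j, a j`. Taking the infimum over `(S, R)` finishes the proof.

Since `sInf` on `ℝ` is meaningful only for nonempty sets bounded below, the argument also uses
that `S = 0`, `R = 0` is feasible, and that each summand of the objective is nonnegative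
(`term_nonneg`).
-/

open Matrix BigOperators
open scoped ComplexOrder Classical

/-- Optimal value of the paper's semidefinite program (Eq. (12) with `W = I`) for a tuple of
Hermitian observables `Y₁, …, Y_k` on the state `ρ`: the infimum of
`∑_j Tr[ρ(𝕊_{jj} − R_j Y_j − Y_j R_j + Y_j²)]` over families `(𝕊_{jl})` with
`𝕊_{jl} = 𝕊_{lj} = 𝕊_{jl}†` and Hermitian `R_j`, subject to the block matrix with
`(j,l)`-block `𝕊_{jl} − R_j R_l` being positive semidefinite. -/
noncomputable def E0 {d : ℕ} (ρ : Matrix (Fin d) (Fin d) ℂ) {k : ℕ}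
    (Y : Fin k → Matrix (Fin d) (Fin d) ℂ) : ℝ :=
  sInf { t : ℝ |
    ∃ (S : Fin k → Fin k → Matrix (Fin d) (Fin d) ℂ)
      (R : Fin k → Matrix (Fin d) (Fin d) ℂ),
      (∀ j l, S j l = S l j) ∧ (∀ j l, (S j l).IsHermitian) ∧ (∀ j, (R j).IsHermitian) ∧
      (Matrix.of fun (p q : Fin k × Fin d) =>
        (S p.1 q.1 - R p.1 * R q.1) p.2 q.2).PosSemidef ∧
      t = ∑ j, (ρ * (S j j - R j * Y j - Y j * R j + Y j * Y j)).trace.re }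

open scoped MatrixOrder in
/-- The trace of a product of two positive semidefinite matrices is nonnegative: writing
`A = Bᴴ B`, it is the trace of the positive semidefinite matrix `B M Bᴴ`. -/
lemma trace_mul_re_nonneg {d : ℕ} {A M : Matrix (Fin d) (Fin d) ℂ}
    (hA : A.PosSemidef) (hM : M.PosSemidef) : 0 ≤ (A * M).trace.re := by
  obtain ⟨B, rfl⟩ := CStarAlgebra.nonneg_iff_eq_star_mul_self.mp hA.nonneg
  have h := (hM.mul_mul_conjTranspose_same B).trace_nonneg
  rw [Matrix.trace_mul_comm, ← Matrix.mul_assoc] at h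
  exact (Complex.le_def.mp h).1

/-- Each summand of the objective is nonnegative at a feasible point, by the decomposition
`S - R Y - Y R + Y² = (S - R²) + (R - Y)²`. -/
lemma term_nonneg {d : ℕ} {ρ S R Y : Matrix (Fin d) (Fin d) ℂ} (hρ : ρ.PosSemidef)
    (hR : R.IsHermitian) (hY : Y.IsHermitian) (hS : (S - R * R).PosSemidef) :
    0 ≤ (ρ * (S - R * Y - Y * R + Y * Y)).trace.re := by
  have h2 : ((R - Y) * (R - Y)).PosSemidef := by
    have h := Matrix.posSemidef_conjTranspose_mul_self (R - Y)
    rwa [(hR.sub hY).eq] at h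
  have e : S - R * Y - Y * R + Y * Y = (S - R * R) + (R - Y) * (R - Y) := by noncomm_ring
  rw [e]
  exact trace_mul_re_nonneg hρ (hS.add h2)

/-- The set whose infimum is `E0` is bounded below (by `0`). -/
lemma E0_bddBelow {d k : ℕ} {ρ : Matrix (Fin d) (Fin d) ℂ} (hρ : ρ.PosSemidef)
    (Y : Fin k → Matrix (Fin d) (Fin d) ℂ) (hY : ∀ j, (Y j).IsHermitian) :
    BddBelow { t : ℝ |
      ∃ (S : Fin k → Fin k → Matrix (Fin d) (Fin d) ℂ)
        (R : Fin k → Matrix (Fin d) (Fin d) ℂ),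
        (∀ j l, S j l = S l j) ∧ (∀ j l, (S j l).IsHermitian) ∧ (∀ j, (R j).IsHermitian) ∧
        (Matrix.of fun (p q : Fin k × Fin d) =>
          (S p.1 q.1 - R p.1 * R q.1) p.2 q.2).PosSemidef ∧
        t = ∑ j, (ρ * (S j j - R j * Y j - Y j * R j + Y j * Y j)).trace.re } := by
  refine ⟨0, ?_⟩
  rintro t ⟨S, R, -, -, hR, hP, rfl⟩
  exact Finset.sum_nonneg fun j _ =>
    term_nonneg hρ (hR j) (hY j) (hP.submatrix fun i : Fin d => (j, i))

/-- A feasible point of the `n`-observable program bounds the optimal value for any pair of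
observables by the two corresponding summands of its objective. -/
lemma feasible_pair {d n : ℕ} {ρ : Matrix (Fin d) (Fin d) ℂ} (hρ : ρ.PosSemidef)
    {X : Fin n → Matrix (Fin d) (Fin d) ℂ} (hX : ∀ j, (X j).IsHermitian)
    {S : Fin n → Fin n → Matrix (Fin d) (Fin d) ℂ} {R : Fin n → Matrix (Fin d) (Fin d) ℂ}
    (hsymm : ∀ j l, S j l = S l j) (hS : ∀ j l, (S j l).IsHermitian)
    (hR : ∀ j, (R j).IsHermitian)
    (hP : (Matrix.of fun (p q : Fin n × Fin d) =>
      (S p.1 q.1 - R p.1 * R q.1) p.2 q.2).PosSemidef) (j k : Fin n) :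
    E0 ρ ![X j, X k] ≤
      (ρ * (S j j - R j * X j - X j * R j + X j * X j)).trace.re +
      (ρ * (S k k - R k * X k - X k * R k + X k * X k)).trace.re := by
  refine csInf_le (E0_bddBelow hρ _ ?_) ?_
  · intro i
    fin_cases i
    · exact hX j
    · exact hX k
  · let f : Fin 2 → Fin n := ![j, k]
    exact ⟨fun a b => S (f a) (f b), fun a => R (f a), fun _ _ => hsymm _ _, fun _ _ => hS _ _,
      fun _ => hR _, hP.submatrix fun p : Fin 2 × Fin d => (f p.1, p.2),
      by simp [Fin.sum_univ_two, f]⟩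

/-- Every index lies in exactly `n - 1` pairs. -/
lemma sum_pairs {n : ℕ} (a : Fin n → ℝ) :
    (∑ j, ∑ k, if j < k then a j + a k else 0) = ((n : ℝ) - 1) * ∑ j, a j := by
  have h1 : (∑ j, ∑ k, if j < k then a j + a k else 0) =
      (∑ j, ∑ k, if j < k then a j else 0) + ∑ j, ∑ k, if k < j then a j else 0 := by
    rw [Finset.sum_comm (f := fun j k => if k < j then a j else 0)]
    simp only [← Finset.sum_add_distrib]
    refine Finset.sum_congr rfl fun j _ => Finset.sum_congr rfl fun k _ => ?_
    split_ifs <;> simp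
  rw [h1, Finset.mul_sum, ← Finset.sum_add_distrib]
  refine Finset.sum_congr rfl fun j _ => ?_
  have h2 : ∀ k, ((if j < k then a j else 0) + if k < j then a j else 0) =
      a j - if k = j then a j else 0 := by
    intro k
    rcases lt_trichotomy j k with h | h | h
    · simp [h, h.not_gt, h.ne']
    · simp [h]
    · simp [h, h.not_gt, h.ne]
  rw [← Finset.sum_add_distrib, Finset.sum_congr rfl fun k _ => h2 k, Finset.sum_sub_distrib]
  simp
  ring

/-- **Superadditivity of the SDP bound** (Section S8 of the Supplementary Material): for a
density matrix `ρ` and Hermitian `X₁, …, Xₙ` with `n ≥ 2`,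
`E₀(X₁,…,Xₙ) ≥ (1/(n−1)) ∑_{j<k} E₀(X_j, X_k)`. -/
theorem stmt16 {d n : ℕ} (hn : 2 ≤ n) (ρ : Matrix (Fin d) (Fin d) ℂ)
    (hρ : ρ.PosSemidef) (hρtr : ρ.trace = 1)
    (X : Fin n → Matrix (Fin d) (Fin d) ℂ) (hX : ∀ j, (X j).IsHermitian) :
    E0 ρ X ≥ (1 / ((n : ℝ) - 1)) *
      ∑ j, ∑ k, if j < k then E0 ρ ![X j, X k] else 0 := by
  have hn1 : (0 : ℝ) < (n : ℝ) - 1 := by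
    have : (2 : ℝ) ≤ n := by exact_mod_cast hn
    linarith
  refine le_csInf ?_ ?_
  · refine ⟨_, fun _ _ => 0, fun _ => 0, fun _ _ => rfl, fun _ _ => Matrix.isHermitian_zero,
      fun _ => Matrix.isHermitian_zero, ?_, rfl⟩
    convert Matrix.PosSemidef.zero using 1
    ext p q
    simp
  · rintro t ⟨S, R, hsymm, hS, hR, hP, rfl⟩
    rw [one_div, inv_mul_le_iff₀ hn1, ← sum_pairs]
    refine Finset.sum_le_sum fun j _ => Finset.sum_le_sum fun k _ => ?_
    split_ifs
    · exact feasible_pair hρ hX hsymm hS hR hP j k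
    · exact le_rfl
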